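/- Let A be a k-algebra with a filtration (A(u))_{u ∈ ℕ₀^n} indexed by ℕ₀^n ordered lexicographically, satisfying A(u)·A(v) ⊆ A(u+v), A(u) ⊆ A(v) for u ≤ v, and ∪_u A(u) = A, with each A(u)/∑_{v<u}A(v) finite-dimensional. If the associated ℕ₀^n-graded algebra gr A = ⊕_u A(u)/∑_{v<u} A(v) is a finitely generated free module over a central (or normal) Noetherian subalgebra, then A is Noetherian. -/

import Mathlib

namespace MultiFilt

variable {k : Type*} [Field k] {A : Type*} [Ring A] [Algebra k A] {n : ℕ}
  {F : (Fin n → ℕ) → Submodule k A} {G : Type*} [Ring G] [Algebra k G]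

/-- The associated graded of a subspace. -/
def gr (e : ∀ u, F u →ₗ[k] G) (I : Submodule k A) : Submodule k G :=
  ⨆ u, (I.comap (F u).subtype).map (e u)

theorem mem_gr (e : ∀ u, F u →ₗ[k] G) (I : Submodule k A) (u : Fin n → ℕ) (x : F u)
    (hx : (x : A) ∈ I) : e u x ∈ gr e I :=
  Submodule.mem_iSup_of_mem u ⟨x, hx, rfl⟩

theorem gr_mono (e : ∀ u, F u →ₗ[k] G) {I J : Submodule k A} (h : I ≤ J) : gr e I ≤ gr e J :=
  iSup_mono fun _ => Submodule.map_mono (Submodule.comap_mono h)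

theorem gr_induction (e : ∀ u, F u →ₗ[k] G) (I : Submodule k A) (N : Submodule k G)
    (h : ∀ u (x : F u), (x : A) ∈ I → e u x ∈ N) : gr e I ≤ N := by
  refine iSup_le fun u => ?_
  rintro _ ⟨x, hx, rfl⟩
  exact h u x hx

theorem comp_mem (e : ∀ u, F u →ₗ[k] G) (𝒢 : (Fin n → ℕ) → Submodule k G) [GradedAlgebra 𝒢]
    (hrange : ∀ u, LinearMap.range (e u) = 𝒢 u) (I : Submodule k A) (u : Fin n → ℕ) (x : F u)
    (hx : e u x ∈ gr e I) : ∃ y : F u, (y : A) ∈ I ∧ e u y = e u x := by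
  have hm : ∀ v (y : F v), e v y ∈ 𝒢 v := fun v y => hrange v ▸ LinearMap.mem_range_self _ _
  have key : gr e I ≤ ((I.comap (F u).subtype).map (e u)).comap (GradedAlgebra.proj 𝒢 u) := by
    apply gr_induction
    intro v y hy
    rw [Submodule.mem_comap, GradedAlgebra.proj_apply]
    by_cases huv : v = u
    · subst huv
      rw [DirectSum.decompose_of_mem_same _ (hm v y)]
      exact ⟨y, hy, rfl⟩
    · rw [DirectSum.decompose_of_mem_ne _ (hm v y) huv]
      exact zero_mem _
  have := key hx
  rw [Submodule.mem_comap, GradedAlgebra.proj_apply,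
    DirectSum.decompose_of_mem_same _ (hm u x)] at this
  obtain ⟨y, hy, h⟩ := this
  exact ⟨y, hy, h⟩

theorem gr_inj (hmono : ∀ u v : Fin n → ℕ, toLex u ≤ toLex v → F u ≤ F v)
    (hexh : ∀ a : A, ∃ u, a ∈ F u)
    (e : ∀ u, F u →ₗ[k] G) (𝒢 : (Fin n → ℕ) → Submodule k G) [GradedAlgebra 𝒢]
    (hrange : ∀ u, LinearMap.range (e u) = 𝒢 u)
    (hker : ∀ u (x : F u), e u x = 0 ↔
      (x : A) ∈ ⨆ (v : Fin n → ℕ) (_ : toLex v < toLex u), F v)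
    {I J : Submodule k A} (hIJ : I ≤ J) (h : gr e J ≤ gr e I) : J ≤ I := by
  have key : ∀ w : Lex (Fin n → ℕ), ∀ x ∈ F (ofLex w), x ∈ J → x ∈ I := by
    intro w
    induction w using WellFoundedLT.induction with
    | ind w ih =>
      intro x hx hxJ
      obtain ⟨y, hyI, hy⟩ := comp_mem e 𝒢 hrange I (ofLex w) ⟨x, hx⟩
        (h (mem_gr e J (ofLex w) ⟨x, hx⟩ hxJ))
      have hz : e (ofLex w) (⟨x, hx⟩ - y) = 0 := by rw [map_sub, hy, sub_self]
      rw [hker] at hz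
      have hdiff : x - (y : A) ∈ I := by
        have hle : (⨆ (v : Fin n → ℕ) (_ : toLex v < toLex (ofLex w)), F v) ≤
            ⨆ v : {v : Lex (Fin n → ℕ) // v < w}, F (ofLex v.1) :=
          iSup₂_le fun v hv => le_iSup (fun v : {v : Lex (Fin n → ℕ) // v < w} => F (ofLex v.1))
            ⟨toLex v, hv⟩
        have hz' := hle hz
        by_cases hne : Nonempty {v : Lex (Fin n → ℕ) // v < w}
        · rw [Submodule.mem_iSup_of_directed] at hz'
          · obtain ⟨v, hv⟩ := hz'
            exact ih v.1 v.2 _ hv (J.sub_mem hxJ (hIJ hyI))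
          · have hm : Monotone (fun v : {v : Lex (Fin n → ℕ) // v < w} => F (ofLex v.1)) :=
              fun a b hab => hmono _ _ hab
            exact hm.directed_le
        · rw [not_nonempty_iff] at hne
          rw [iSup_of_empty, Submodule.mem_bot] at hz'
          have : x - (y : A) = 0 := hz'
          rw [this]; exact I.zero_mem
      have := I.add_mem hdiff hyI
      rwa [sub_add_cancel] at this
  intro x hx
  obtain ⟨u, hu⟩ := hexh x
  exact key (toLex u) x hu hx

theorem span_top (e : ∀ u, F u →ₗ[k] G) (𝒢 : (Fin n → ℕ) → Submodule k G) [GradedAlgebra 𝒢]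
    (hrange : ∀ u, LinearMap.range (e u) = 𝒢 u) (N : Submodule k G)
    (h : ∀ u (x : F u), e u x ∈ N) (g : G) : g ∈ N := by
  induction g using DirectSum.Decomposition.inductionOn 𝒢 with
  | zero => exact N.zero_mem
  | @homogeneous i m =>
    have : (m : G) ∈ LinearMap.range (e i) := by rw [hrange]; exact m.2
    obtain ⟨x, hx⟩ := this
    rw [← hx]; exact h i x
  | add a b ha hb => exact N.add_mem ha hb

end MultiFilt

/-- If a `k`-algebra `A` has an exhaustive multiplicative filtration indexed by `ℕ^n` with the
lexicographic order, with finite-dimensional associated graded pieces, and the associated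
graded algebra (realized as a graded algebra `G` with pieces `𝒢 u` together with compatible
maps `e u : F u → G` inducing isomorphisms `F u / ∑_{v <ₗₑₓ u} F v ≅ 𝒢 u`) is a finitely
generated free module over a central Noetherian subalgebra, then `A` is Noetherian. -/
theorem noetherian_of_multifiltration {k : Type*} [Field k]
    {A : Type*} [Ring A] [Algebra k A] (n : ℕ)
    (F : (Fin n → ℕ) → Submodule k A)
    (hone : (1 : A) ∈ F 0)
    (hmono : ∀ u v : Fin n → ℕ, toLex u ≤ toLex v → F u ≤ F v)
    (hmul : ∀ u v : Fin n → ℕ, ∀ x ∈ F u, ∀ y ∈ F v, x * y ∈ F (u + v))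
    (hexh : ∀ a : A, ∃ u, a ∈ F u)
    {G : Type*} [Ring G] [Algebra k G]
    (𝒢 : (Fin n → ℕ) → Submodule k G) [GradedAlgebra 𝒢]
    (hfin : ∀ u, FiniteDimensional k ↥(𝒢 u))
    (e : ∀ u, F u →ₗ[k] G)
    (hrange : ∀ u, LinearMap.range (e u) = 𝒢 u)
    (hker : ∀ u (x : F u), e u x = 0 ↔
      (x : A) ∈ ⨆ (v : Fin n → ℕ) (_ : toLex v < toLex u), F v)
    (hmule : ∀ (u v : Fin n → ℕ) (x : F u) (y : F v),
      e (u + v) ⟨(x : A) * (y : A), hmul u v x x.2 y y.2⟩ = e u x * e v y)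
    (Z : Subalgebra k G)
    (hZcentral : ∀ z ∈ Z, ∀ g : G, z * g = g * z)
    (hZnoeth : IsNoetherianRing Z)
    (hGfin : Module.Finite Z G) (hGfree : Module.Free Z G) :
    IsNoetherianRing A ∧ IsNoetherianRing Aᵐᵒᵖ := by
  have hNoeth : IsNoetherian Z G := isNoetherian_of_isNoetherianRing_of_finite Z G
  have hwf : WellFoundedGT (Submodule Z G) := inferInstance
  have hL : ∀ I : Submodule k A, (∀ a, ∀ x ∈ I, a * x ∈ I) →
      ∀ g : G, ∀ x ∈ MultiFilt.gr e I, g * x ∈ MultiFilt.gr e I := by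
    intro I hI g
    have := MultiFilt.span_top e 𝒢 hrange
      { carrier := {g : G | ∀ x ∈ MultiFilt.gr e I, g * x ∈ MultiFilt.gr e I}
        zero_mem' := fun x _ => by simp
        add_mem' := fun {a b} ha hb x hx => by
          rw [add_mul]; exact Submodule.add_mem _ (ha x hx) (hb x hx)
        smul_mem' := fun c a ha x hx => by
          rw [smul_mul_assoc]; exact Submodule.smul_mem _ _ (ha x hx) } ?_ g
    · exact this
    · intro u a x hx
      refine MultiFilt.gr_induction e I ((MultiFilt.gr e I).comap (LinearMap.mulLeft k (e u a)))
        ?_ hx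
      intro v y hy
      change e u a * e v y ∈ MultiFilt.gr e I
      rw [← hmule]
      exact MultiFilt.mem_gr e I _ _ (hI _ _ hy)
  have hR : ∀ I : Submodule k A, (∀ a, ∀ x ∈ I, x * a ∈ I) →
      ∀ g : G, ∀ x ∈ MultiFilt.gr e I, x * g ∈ MultiFilt.gr e I := by
    intro I hI g
    have := MultiFilt.span_top e 𝒢 hrange
      { carrier := {g : G | ∀ x ∈ MultiFilt.gr e I, x * g ∈ MultiFilt.gr e I}
        zero_mem' := fun x _ => by simp
        add_mem' := fun {a b} ha hb x hx => by
          rw [mul_add]; exact Submodule.add_mem _ (ha x hx) (hb x hx)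
        smul_mem' := fun c a ha x hx => by
          rw [mul_smul_comm]; exact Submodule.smul_mem _ _ (ha x hx) } ?_ g
    · exact this
    · intro u a x hx
      refine MultiFilt.gr_induction e I ((MultiFilt.gr e I).comap (LinearMap.mulRight k (e u a)))
        ?_ hx
      intro v y hy
      change e v y * e u a ∈ MultiFilt.gr e I
      rw [← hmule]
      exact MultiFilt.mem_gr e I _ _ (hI _ _ hy)
  constructor
  · let r : Ideal A → Submodule k A := fun I => I.restrictScalars k
    let φ : Ideal A → Submodule Z G := fun I =>
      { carrier := MultiFilt.gr e (r I)
        zero_mem' := Submodule.zero_mem _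
        add_mem' := Submodule.add_mem _
        smul_mem' := fun z x hx =>
          hL (r I) (fun a x hx => Ideal.mul_mem_left I a hx) (z : G) x hx }
    have hφ : StrictMono φ := by
      intro I J hIJ
      refine lt_of_le_not_ge (fun x hx => MultiFilt.gr_mono e (I := r I) (J := r J) hIJ.le hx) ?_
      intro hle
      exact hIJ.not_ge (MultiFilt.gr_inj hmono hexh e 𝒢 hrange hker
        (I := r I) (J := r J) hIJ.le hle)
    have : WellFoundedGT (Ideal A) := hφ.wellFoundedGT
    exact isNoetherian_iff'.mpr this
  · let r : Ideal Aᵐᵒᵖ → Submodule k A := fun I =>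
      (I.restrictScalars k).comap (MulOpposite.opLinearEquiv k : A ≃ₗ[k] Aᵐᵒᵖ).toLinearMap
    have hr : ∀ I (x : A), x ∈ r I ↔ MulOpposite.op x ∈ I := fun I x => Iff.rfl
    let φ : Ideal Aᵐᵒᵖ → Submodule Z G := fun I =>
      { carrier := MultiFilt.gr e (r I)
        zero_mem' := Submodule.zero_mem _
        add_mem' := Submodule.add_mem _
        smul_mem' := fun z x hx => by
          have := hR (r I) (fun a x hx => Ideal.mul_mem_left I (MulOpposite.op a) hx) (z : G) x hx
          rw [← hZcentral z z.2 x] at this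
          exact this }
    have hφ : StrictMono φ := by
      intro I J hIJ
      have hle' : r I ≤ r J := fun x hx => hIJ.le hx
      refine lt_of_le_not_ge (fun x hx => MultiFilt.gr_mono e hle' hx) ?_
      intro hle
      have := MultiFilt.gr_inj hmono hexh e 𝒢 hrange hker hle' hle
      exact hIJ.not_ge fun x hx => this (x := x.unop) hx
    have : WellFoundedGT (Ideal Aᵐᵒᵖ) := hφ.wellFoundedGT
    exact isNoetherian_iff'.mpr this
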